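/- arXiv:0804.2512 — 2 statements merged into one kernel-verified Lean document; each statement's English description precedes it below -/
import Mathlib

section
/- For every positive integer n and every real s > 0, the iterated integral over the hyperplane H_n = {x ∈ ℝ^n : x_1 + ... + x_n = 0} of exp(-λ(e^{x_1} + ... + e^{x_n})), multiplied by n λ^{ns-1} and integrated over λ ∈ (0,∞), equals Γ(s)^n. Equivalently, with F_n(λ) = ∫_{H_n} exp(-λ Σ_k e^{x_k}) dx (integrating over the (n-1)-dimensional Lebesgue measure on H_n), one has ∫_0^∞ n F_n(λ) λ^{ns-1} dλ = Γ(s)^n. -/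
open MeasureTheory Real

/-- The Mellin–Barnes function `F n λ`: the integral over the hyperplane
`{x ∈ ℝⁿ : Σ x_k = 0}` of `exp (-λ Σ exp (x_k))`, parametrized by the
first `n - 1` coordinates. -/
noncomputable def MellinBarnesF (n : ℕ) (lam : ℝ) : ℝ :=
  ∫ x : Fin (n - 1) → ℝ,
    Real.exp (-lam * ((∑ k, Real.exp (x k)) + Real.exp (-∑ k, x k)))

lemma exp_image_univ : Real.exp '' Set.univ = Set.Ioi (0 : ℝ) := by
  rw [Set.image_univ, Real.range_exp]

lemma integral_Ioi_eq_exp (f : ℝ → ℝ) :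
    ∫ x in Set.Ioi (0 : ℝ), f x = ∫ t : ℝ, Real.exp t * f (Real.exp t) := by
  have h := integral_image_eq_integral_abs_deriv_smul (s := Set.univ) (f := Real.exp)
    (f' := Real.exp) MeasurableSet.univ
    (fun x _ => (Real.hasDerivAt_exp x).hasDerivWithinAt) (Real.exp_injective.injOn) f
  rw [exp_image_univ] at h
  simpa [abs_of_pos (Real.exp_pos _)] using h

lemma integrableOn_Ioi_iff_exp (f : ℝ → ℝ) :
    IntegrableOn f (Set.Ioi (0 : ℝ)) ↔ Integrable (fun t : ℝ => Real.exp t * f (Real.exp t)) := by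
  have h := integrableOn_image_iff_integrableOn_abs_deriv_smul (s := Set.univ) (f := Real.exp)
    (f' := Real.exp) MeasurableSet.univ
    (fun x _ => (Real.hasDerivAt_exp x).hasDerivWithinAt) (Real.exp_injective.injOn) f
  rw [exp_image_univ] at h
  simpa [abs_of_pos (Real.exp_pos _)] using h

lemma exp_mul_rpow_sub_one (t a : ℝ) :
    Real.exp t * (Real.exp t) ^ (a - 1) = Real.exp (a * t) := by
  rw [← Real.exp_mul, ← Real.exp_add]; congr 1; ring

lemma gam_eq (s t : ℝ) : Real.exp t * (Real.exp (-Real.exp t) * (Real.exp t) ^ (s - 1)) =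
    Real.exp (s * t - Real.exp t) := by
  rw [mul_left_comm, exp_mul_rpow_sub_one, ← Real.exp_add]; congr 1; ring

lemma gam_integrable (s : ℝ) (hs : 0 < s) :
    Integrable (fun t : ℝ => Real.exp (s * t - Real.exp t)) := by
  have h := (integrableOn_Ioi_iff_exp _).1 (Real.GammaIntegral_convergent hs)
  simpa only [gam_eq] using h

lemma gam_integral (s : ℝ) (hs : 0 < s) :
    ∫ t : ℝ, Real.exp (s * t - Real.exp t) = Real.Gamma s := by
  rw [Real.Gamma_eq_integral hs, integral_Ioi_eq_exp]
  simp only [gam_eq]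

lemma core (m : ℕ) (g : ℝ → ℝ) (hg : Integrable g) :
    (∫ t, g t) ^ (m + 1) = ∫ t : ℝ, ((m : ℝ) + 1) *
      ∫ x : Fin m → ℝ, (∏ k, g (x k + t)) * g (t - ∑ k, x k) := by
  have hm : (0 : ℝ) < (m : ℝ) + 1 := by positivity
  have hprod : Integrable (fun y : Fin m → ℝ => ∏ k, g (y k)) :=
    Integrable.fintype_prod (fun _ => hg)
  have hh : Integrable (fun t => g (((m : ℝ) + 1) * t)) := hg.comp_mul_left' hm.ne'
  have hmp : MeasurePreserving
      (fun p : (Fin m → ℝ) × ℝ => (p.1, p.2 - (∑ k, p.1 k) / ((m : ℝ) + 1)))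
      (volume.prod volume) (volume.prod volume) := by
    refine MeasurePreserving.skew_product
      (g := fun (y : Fin m → ℝ) (t : ℝ) => t - (∑ k, y k) / ((m : ℝ) + 1))
      (MeasurePreserving.id _) (by unfold Function.uncurry; fun_prop)
      (Filter.Eventually.of_forall fun y => ?_)
    exact (measurePreserving_sub_right volume _).map_eq
  have hint := (hmp.integrable_comp (hprod.mul_prod hh).aestronglyMeasurable).2
    (hprod.mul_prod hh)
  have hswap := integral_integral_swap
    (f := fun (y : Fin m → ℝ) (t : ℝ) => (∏ k, g (y k)) *
      g (((m : ℝ) + 1) * (t - (∑ k, y k) / ((m : ℝ) + 1)))) (μ := volume) (ν := volume) hint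
  have h1 : ∀ y : Fin m → ℝ, ∫ t : ℝ, (∏ k, g (y k)) *
      g (((m : ℝ) + 1) * (t - (∑ k, y k) / ((m : ℝ) + 1))) =
      (∏ k, g (y k)) * (((m : ℝ) + 1)⁻¹ * ∫ t, g t) := by
    intro y
    rw [integral_const_mul,
      integral_sub_right_eq_self (fun t => g (((m : ℝ) + 1) * t)) _,
      Measure.integral_comp_mul_left, abs_of_pos (inv_pos.2 hm), smul_eq_mul]
  have h2 : ∫ y : Fin m → ℝ, ∏ k, g (y k) = (∫ t, g t) ^ m := by
    rw [integral_fintype_prod_volume_eq_prod (fun _ => g)]; simp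
  simp only [h1] at hswap
  rw [integral_mul_const, h2] at hswap
  rw [integral_const_mul]
  have h3 : ∀ t : ℝ, ∫ x : Fin m → ℝ, (∏ k, g (x k + t)) * g (t - ∑ k, x k) =
      ∫ y : Fin m → ℝ, (∏ k, g (y k)) *
      g (((m : ℝ) + 1) * (t - (∑ k, y k) / ((m : ℝ) + 1))) := by
    intro t
    symm
    rw [← integral_add_right_eq_self _ (fun _ : Fin m => t)]
    congr 1; ext x
    simp only [Pi.add_apply, Finset.sum_add_distrib, Finset.sum_const, Finset.card_univ,
      Fintype.card_fin, nsmul_eq_mul]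
    have h4 : ((m : ℝ) + 1) * (t - (∑ k, x k + (m : ℝ) * t) / ((m : ℝ) + 1)) =
        t - ∑ k, x k := by
      rw [mul_sub, mul_div_cancel₀ _ hm.ne']
      ring
    rw [h4]
  simp only [h3]
  rw [← hswap]
  field_simp
  ring

theorem mellin_of_F_eq_Gamma_pow (n : ℕ) (hn : 1 ≤ n) (s : ℝ) (hs : 0 < s) :
    ∫ lam in Set.Ioi (0 : ℝ),
      (n : ℝ) * MellinBarnesF n lam * lam ^ ((n : ℝ) * s - 1) =
    (Real.Gamma s) ^ n := by
  obtain ⟨m, rfl⟩ : ∃ m, n = m + 1 := ⟨n - 1, by omega⟩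
  rw [← gam_integral s hs, core m _ (gam_integrable s hs), integral_Ioi_eq_exp]
  congr 1; ext t
  have e : Real.exp t * (((m + 1 : ℕ) : ℝ) * MellinBarnesF (m + 1) (Real.exp t) *
      (Real.exp t) ^ (((m + 1 : ℕ) : ℝ) * s - 1)) = ((m : ℝ) + 1) *
      (Real.exp (((m + 1 : ℕ) : ℝ) * s * t) * MellinBarnesF (m + 1) (Real.exp t)) := by
    rw [← exp_mul_rpow_sub_one]; push_cast; ring
  rw [e]
  congr 1
  unfold MellinBarnesF
  rw [← integral_const_mul]
  change ∫ x : Fin m → ℝ, _ = _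
  congr 1; ext x
  change _ * Real.exp (-Real.exp t * ((∑ k : Fin m, Real.exp (x k)) + Real.exp (-∑ k : Fin m, x k))) = _
  rw [← Real.exp_sum, ← Real.exp_add, ← Real.exp_add]
  congr 1
  have : Real.exp (t - ∑ k, x k) = Real.exp t * Real.exp (-∑ k, x k) := by
    rw [← Real.exp_add, sub_eq_add_neg]
  rw [this]
  simp only [Real.exp_add, Finset.sum_sub_distrib, mul_add, Finset.sum_add_distrib,
    ← Finset.mul_sum, ← Finset.sum_mul, Finset.sum_const, Finset.card_univ,
      Fintype.card_fin, nsmul_eq_mul]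
  push_cast
  ring
end

section
/- Let f = (f_1, ..., f_n) be a vector of positive reals and let ρ_n(f) = (∏_{k=1}^n f_k)^{1/n}. Then the Laplace transform D_n(f) = ∫_{M_{n,r}} exp(-Σ_{k=1}^n f_k y_k) dm_n(y) of the invariant measure m_n on the hypersphere M_{n,r} = {y ∈ ℝ_{>0}^n : ∏ y_k = r^n} satisfies D_n(f) = F_n(ρ_n(f) · r), i.e. D_n depends on f only through the geometric mean ρ_n(f). -/
open MeasureTheory Real

/-- The point of the hypersphere `M_{n,r} = {y : ∏ y_k = rⁿ, y_k > 0}`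
corresponding to the coordinates `x ∈ ℝ^{n-1}` on the hyperplane `{Σ x_k = 0}`:
`y_k = r·exp(x_k)` for `k < n - 1` and `y_{n-1} = r·exp(-Σ x_j)`. -/
noncomputable def hypersphereCoord (n : ℕ) (r : ℝ) (x : Fin (n - 1) → ℝ)
    (k : Fin n) : ℝ :=
  if h : (k : ℕ) < n - 1 then r * Real.exp (x ⟨k, h⟩)
  else r * Real.exp (-∑ j, x j)

/-- The Laplace transform of the invariant measure `m_n` on `M_{n,r}`:
`D_n(f) = ∫_{M_{n,r}} exp(-Σ f_k y_k) dm_n(y)`, written in the coordinates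
`x ∈ ℝ^{n-1}` in which `m_n` is Lebesgue measure on `{Σ x_k = 0}`. -/
noncomputable def laplaceD (n : ℕ) (r : ℝ) (f : Fin n → ℝ) : ℝ :=
  ∫ x : Fin (n - 1) → ℝ,
    Real.exp (-∑ k : Fin n, f k * hypersphereCoord n r x k)

theorem laplaceD_eq_F_geom_mean (n : ℕ) (hn : 1 ≤ n) (r : ℝ) (hr : 0 < r)
    (f : Fin n → ℝ) (hf : ∀ k, 0 < f k) :
    laplaceD n r f = MellinBarnesF n ((∏ k, f k) ^ ((1 : ℝ) / n) * r) := by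
  obtain ⟨m, rfl⟩ : ∃ m, n = m + 1 := ⟨n - 1, by omega⟩
  set ρ : ℝ := (∏ k, f k) ^ ((1 : ℝ) / ((m + 1 : ℕ) : ℝ)) with hρ
  have hP : 0 < ∏ k, f k := Finset.prod_pos (fun k _ => hf k)
  have hρ0 : 0 < ρ := Real.rpow_pos_of_pos hP _
  have hlog : ((m + 1 : ℕ) : ℝ) * Real.log ρ = ∑ k, Real.log (f k) := by
    rw [hρ, Real.log_rpow hP, Real.log_prod (fun k _ => (hf k).ne')]
    have : ((m + 1 : ℕ) : ℝ) ≠ 0 := by positivity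
    field_simp
  let c : Fin (m + 1) → ℝ := fun k => Real.log ρ - Real.log (f k)
  have hc : ∀ k, f k * Real.exp (c k) = ρ := by
    intro k
    simp only [c]
    rw [Real.exp_sub, Real.exp_log hρ0, Real.exp_log (hf k)]
    have := (hf k).ne'
    field_simp
  have hsum : ∑ k, c k = 0 := by
    simp only [c, Finset.sum_sub_distrib, ← hlog]
    simp
  rw [Fin.sum_univ_castSucc] at hsum
  have hlast : -∑ k : Fin m, c k.castSucc = c (Fin.last m) := by linarith
  unfold laplaceD MellinBarnesF
  change (∫ x : Fin m → ℝ, _) = ∫ x : Fin m → ℝ, _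
  rw [← integral_add_right_eq_self _ (fun k : Fin m => c k.castSucc)]
  congr 1
  funext x
  congr 1
  rw [Fin.sum_univ_castSucc, neg_mul, mul_add, Finset.mul_sum]
  congr 1
  congr 1
  · refine Finset.sum_congr rfl fun k _ => ?_
    have h : ((k.castSucc : Fin (m + 1)) : ℕ) < m + 1 - 1 := by simp
    rw [hypersphereCoord, dif_pos h]
    change f k.castSucc * (r * Real.exp (x k + c k.castSucc)) = _
    rw [Real.exp_add, ← hc k.castSucc]
    ring
  · have h : ¬ (((Fin.last m : Fin (m + 1)) : ℕ) < m + 1 - 1) := by simp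
    rw [hypersphereCoord, dif_neg h]
    change f (Fin.last m) * (r * Real.exp (-∑ j : Fin m, (x j + c j.castSucc))) =
      ρ * r * Real.exp (-∑ j : Fin m, x j)
    rw [Finset.sum_add_distrib, neg_add, hlast, Real.exp_add, ← hc (Fin.last m)]
    ring
end
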